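/- Let Φₛ(y) = (1/8)·(15·sech²(y) − 2·cosh²(y) − 5 − 15·y·tanh(y)·sech²(y)), where sech t = 1/cosh t. Then the function v(y) = Φₛ(y/√2) satisfies v''(y) + 2·(3·sech²(y/√2) − 1)·v(y) = 0 for all y ∈ ℝ; moreover Φₛ(0) = 1 and Φₛ'(0) = 0. -/

import Mathlib

/-- The hyperbolic secant. -/
noncomputable def sech (t : ℝ) : ℝ := 1 / Real.cosh t

/-- The symmetric complementary function of the linearisation about the homoclinic. -/
noncomputable def Phi_s (y : ℝ) : ℝ :=
  (1/8) * (15 * (sech y) ^ 2 - 2 * (Real.cosh y) ^ 2 - 5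
    - 15 * y * Real.tanh y * (sech y) ^ 2)

/-!
In the variable `z = y / √2` the linearised equation reads `L u = 0` with
`L u = u'' + 4 (3 sech² z - 1) u`. Translation invariance of `U'' + U² = 1` makes the derivative of
the homoclinic orbit, proportional to `w = tanh z sech² z`, an odd solution, so
`L (z w) = z L w + 2 w' = 2 w' = 6 sech⁴ z - 4 sech² z`. On even functions,
`L (sech²) = 6 sech⁴ z`, `L (cosh²) = 10` and `L 1 = 12 sech² z - 4`, and
`15 sech² z - 2 cosh² z - 5 - 15 z w` is a combination for which these contributions cancel.
-/

section SchrodingerOp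

variable {𝕜 : Type*} [NontriviallyNormedField 𝕜] {q u v : 𝕜 → 𝕜} {x : 𝕜}

/-- The one-dimensional Schrödinger operator `u ↦ u'' + q u`, for stating linear second-order
equations and transforming their solutions. The potential `q` enters with a plus sign. -/
noncomputable def schrodingerOp (q u : 𝕜 → 𝕜) (x : 𝕜) : 𝕜 :=
  iteratedDeriv 2 u x + q x * u x

theorem schrodingerOp_sub (hu : ContDiffAt 𝕜 2 u x) (hv : ContDiffAt 𝕜 2 v x) :
    schrodingerOp q (fun t ↦ u t - v t) x = schrodingerOp q u x - schrodingerOp q v x := by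
  simp only [schrodingerOp, iteratedDeriv_fun_sub hu hv]
  ring

theorem schrodingerOp_const_mul (c : 𝕜) (u : 𝕜 → 𝕜) :
    schrodingerOp q (fun t ↦ c * u t) x = c * schrodingerOp q u x := by
  simp only [schrodingerOp, iteratedDeriv_const_mul_field]
  ring

theorem schrodingerOp_const (c : 𝕜) : schrodingerOp q (fun _ ↦ c) x = q x * c := by
  simp [schrodingerOp, iteratedDeriv_const]

theorem schrodingerOp_id_mul (hu : ContDiffAt 𝕜 2 u x) :
    schrodingerOp q (fun t ↦ t * u t) x = x * schrodingerOp q u x + 2 * deriv u x := by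
  have leibniz : iteratedDeriv 2 (fun t ↦ t * u t) x = x * iteratedDeriv 2 u x + 2 * deriv u x := by
    rw [iteratedDeriv_fun_mul contDiffAt_fun_id hu]
    simp [Finset.sum_range_succ, iteratedDeriv_fun_id]
  rw [schrodingerOp, leibniz, schrodingerOp]
  ring

theorem schrodingerOp_comp_const_mul (hu : ContDiff 𝕜 2 u) (c : 𝕜) :
    schrodingerOp (fun t ↦ c ^ 2 * q (c * t)) (fun t ↦ u (c * t)) x
      = c ^ 2 * schrodingerOp q u (c * x) := by
  simp only [schrodingerOp, iteratedDeriv_comp_const_mul hu]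
  ring

theorem schrodingerOp_eq_of_hasDerivAt {u' : 𝕜 → 𝕜} {u'' : 𝕜} (hu : ∀ t, HasDerivAt u (u' t) t)
    (hu' : HasDerivAt u' u'' x) : schrodingerOp q u x = u'' + q x * u x := by
  rw [schrodingerOp, iteratedDeriv_succ, iteratedDeriv_one, funext fun t ↦ (hu t).deriv, hu'.deriv]

end SchrodingerOp

theorem deriv_zero_of_even {𝕜 F : Type*} [NontriviallyNormedField 𝕜]
    [NormedAddCommGroup F] [NormedSpace 𝕜 F] [IsAddTorsionFree F] {f : 𝕜 → F} (hf : f.Even) :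
    deriv f 0 = 0 := by
  have deriv_eq_neg : deriv f 0 = -deriv f 0 := by
    simpa only [funext hf, neg_zero] using deriv_comp_neg f 0
  exact self_eq_neg.mp deriv_eq_neg

theorem tanh_sq_eq_one_sub_sech_sq (x : ℝ) : Real.tanh x ^ 2 = 1 - sech x ^ 2 := by
  rw [Real.tanh_eq_sinh_div_cosh, sech, div_pow, Real.sinh_sq]
  field_simp [(Real.cosh_pos x).ne']

theorem cosh_mul_sech (x : ℝ) : Real.cosh x * sech x = 1 :=
  mul_one_div_cancel (Real.cosh_pos x).ne'

theorem sech_neg (x : ℝ) : sech (-x) = sech x := by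
  rw [sech, sech, Real.cosh_neg]

theorem contDiff_sech {n : WithTop ℕ∞} : ContDiff ℝ n sech :=
  contDiff_const.div Real.contDiff_cosh fun x ↦ (Real.cosh_pos x).ne'

theorem contDiff_tanh {n : WithTop ℕ∞} : ContDiff ℝ n Real.tanh := by
  rw [funext Real.tanh_eq_sinh_div_cosh]
  exact Real.contDiff_sinh.div Real.contDiff_cosh fun x ↦ (Real.cosh_pos x).ne'

theorem hasDerivAt_sech (x : ℝ) : HasDerivAt sech (-(Real.tanh x * sech x)) x := by
  have hcosh := (Real.cosh_pos x).ne'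
  refine ((hasDerivAt_const x (1 : ℝ)).fun_div (Real.hasDerivAt_cosh x) hcosh).congr_deriv ?_
  rw [Real.tanh_eq_sinh_div_cosh, sech]
  field_simp
  ring

theorem hasDerivAt_tanh (x : ℝ) : HasDerivAt Real.tanh (sech x ^ 2) x := by
  have hcosh := (Real.cosh_pos x).ne'
  rw [funext Real.tanh_eq_sinh_div_cosh]
  refine ((Real.hasDerivAt_sinh x).fun_div (Real.hasDerivAt_cosh x) hcosh).congr_deriv ?_
  rw [sech, div_pow, one_pow, ← Real.cosh_sq_sub_sinh_sq x]
  ring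

theorem hasDerivAt_sech_sq (x : ℝ) :
    HasDerivAt (fun t ↦ sech t ^ 2) (-2 * (Real.tanh x * sech x ^ 2)) x :=
  ((hasDerivAt_sech x).fun_pow 2).congr_deriv (by ring)

theorem hasDerivAt_cosh_sq (x : ℝ) :
    HasDerivAt (fun t ↦ Real.cosh t ^ 2) (2 * (Real.cosh x * Real.sinh x)) x :=
  ((Real.hasDerivAt_cosh x).fun_pow 2).congr_deriv (by ring)

/-- The potential `2 U₀ᴴ` of the linearised equation, in the variable `z = y / √2`; since
`d²/dy² = (1/2) d²/dz²`, it appears as `4 (3 sech² z - 1)`. -/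
noncomputable def homoclinicPotential (z : ℝ) : ℝ := 4 * (3 * sech z ^ 2 - 1)

/-- The translation mode of the homoclinic: the derivative of `3 sech² z - 1`, normalised by the
factor `-1/6`. It is the antisymmetric solution of the linearised equation. -/
noncomputable def translationMode (z : ℝ) : ℝ := Real.tanh z * sech z ^ 2

theorem contDiff_translationMode {n : WithTop ℕ∞} : ContDiff ℝ n translationMode :=
  contDiff_tanh.mul (contDiff_sech.pow 2)

theorem hasDerivAt_translationMode (z : ℝ) :
    HasDerivAt translationMode (3 * (sech z ^ 2) ^ 2 - 2 * sech z ^ 2) z := by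
  refine ((hasDerivAt_tanh z).fun_mul (hasDerivAt_sech_sq z)).congr_deriv ?_
  linear_combination -2 * sech z ^ 2 * tanh_sq_eq_one_sub_sech_sq z

theorem schrodingerOp_translationMode (z : ℝ) :
    schrodingerOp homoclinicPotential translationMode z = 0 := by
  have second_deriv := (((hasDerivAt_sech_sq z).fun_pow 2).const_mul 3).fun_sub
    ((hasDerivAt_sech_sq z).const_mul 2)
  rw [schrodingerOp_eq_of_hasDerivAt hasDerivAt_translationMode second_deriv]
  simp only [homoclinicPotential, translationMode]
  ring

theorem schrodingerOp_sech_sq (z : ℝ) :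
    schrodingerOp homoclinicPotential (fun t ↦ sech t ^ 2) z = 6 * sech z ^ 4 := by
  rw [schrodingerOp_eq_of_hasDerivAt hasDerivAt_sech_sq
    ((hasDerivAt_translationMode z).const_mul (-2)), homoclinicPotential]
  ring

theorem schrodingerOp_cosh_sq (z : ℝ) :
    schrodingerOp homoclinicPotential (fun t ↦ Real.cosh t ^ 2) z = 10 := by
  have second_deriv :=
    ((Real.hasDerivAt_cosh z).fun_mul (Real.hasDerivAt_sinh z)).const_mul 2
  rw [schrodingerOp_eq_of_hasDerivAt hasDerivAt_cosh_sq second_deriv, homoclinicPotential]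
  linear_combination 2 * Real.sinh_sq z + 12 * (Real.cosh z * sech z + 1) * cosh_mul_sech z

theorem schrodingerOp_id_mul_translationMode (z : ℝ) :
    schrodingerOp homoclinicPotential (fun t ↦ t * translationMode t) z
      = 6 * sech z ^ 4 - 4 * sech z ^ 2 := by
  rw [schrodingerOp_id_mul contDiff_translationMode.contDiffAt, schrodingerOp_translationMode,
    (hasDerivAt_translationMode z).deriv]
  ring

theorem Phi_s_eq_translationMode : Phi_s = fun z ↦
    1 / 8 * (15 * sech z ^ 2 - 2 * Real.cosh z ^ 2 - 5 - 15 * (z * translationMode z)) := by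
  funext z
  rw [Phi_s, translationMode]
  ring

theorem contDiff_Phi_s {n : WithTop ℕ∞} : ContDiff ℝ n Phi_s := by
  have := contDiff_sech (n := n)
  have := contDiff_translationMode (n := n)
  rw [Phi_s_eq_translationMode]
  fun_prop

theorem even_Phi_s : Phi_s.Even := fun z ↦ by
  simp only [Phi_s, sech_neg, Real.cosh_neg, Real.tanh_neg, mul_neg, neg_mul, neg_neg]

theorem schrodingerOp_Phi_s (z : ℝ) : schrodingerOp homoclinicPotential Phi_s z = 0 := by
  have hsech : ContDiffAt ℝ 2 sech z := contDiff_sech.contDiffAt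
  have hmode : ContDiffAt ℝ 2 translationMode z := contDiff_translationMode.contDiffAt
  rw [Phi_s_eq_translationMode, schrodingerOp_const_mul,
    schrodingerOp_sub (by fun_prop) (by fun_prop), schrodingerOp_sub (by fun_prop) (by fun_prop),
    schrodingerOp_sub (by fun_prop) (by fun_prop), schrodingerOp_const_mul,
    schrodingerOp_const_mul, schrodingerOp_const_mul, schrodingerOp_const, schrodingerOp_sech_sq,
    schrodingerOp_cosh_sq, schrodingerOp_id_mul_translationMode, homoclinicPotential]
  ring

theorem schrodingerOp_Phi_s_div_sqrt_two (y : ℝ) :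
    schrodingerOp (fun t ↦ 2 * (3 * sech (t / √2) ^ 2 - 1)) (fun t ↦ Phi_s (t / √2)) y = 0 := by
  have potential_eq : (fun t ↦ 2 * (3 * sech (t / √2) ^ 2 - 1))
      = fun t ↦ (√2)⁻¹ ^ 2 * homoclinicPotential ((√2)⁻¹ * t) := by
    funext t
    rw [homoclinicPotential, inv_pow, Real.sq_sqrt zero_le_two, div_eq_inv_mul]
    ring
  rw [potential_eq]
  simp only [div_eq_inv_mul]
  rw [schrodingerOp_comp_const_mul contDiff_Phi_s, schrodingerOp_Phi_s, mul_zero]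

/-- `v(y) = Φₛ(y/√2)` solves the linearised equation `v'' + 2(3 sech²(y/√2) − 1)v = 0`,
with `Φₛ(0) = 1` and `Φₛ'(0) = 0`. -/
theorem statement8 :
    (∀ y : ℝ,
      deriv (deriv (fun y : ℝ => Phi_s (y / Real.sqrt 2))) y
        + 2 * (3 * (sech (y / Real.sqrt 2)) ^ 2 - 1) * Phi_s (y / Real.sqrt 2) = 0) ∧
    Phi_s 0 = 1 ∧ deriv Phi_s 0 = 0 := by
  refine ⟨fun y ↦ ?_, ?_, deriv_zero_of_even even_Phi_s⟩
  · simpa only [schrodingerOp, iteratedDeriv_succ, iteratedDeriv_zero]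
      using schrodingerOp_Phi_s_div_sqrt_two y
  · norm_num [Phi_s, sech]
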